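/- arXiv:2108.04978 — 4 statements merged into one kernel-verified Lean document; each statement's English description precedes it below -/
import Mathlib

section
/- (Rényi-DP of the Gaussian Mechanism.) Let p be a positive integer, σ > 0, Δ ≥ 0, and let μ, ν ∈ ℝ^p be vectors with ‖μ − ν‖₂ ≤ Δ. Let P be the product over coordinates j of the Gaussian measures on ℝ with mean μ_j and variance σ², and let Q be the analogous product with means ν_j. Then for every α > 1, the Rényi divergence of order α satisfies D_α(P ‖ Q) = α ‖μ − ν‖₂² / (2σ²), and in particular D_α(P ‖ Q) ≤ α Δ² / (2σ²). -/
open MeasureTheory ProbabilityTheory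

/-- The Rényi divergence of order `α` between probability measures `P` and `Q`
(with `P ≪ Q`): `D_α(P‖Q) = (1/(α−1)) · log ∫ (dP/dQ)^α dQ`. -/
noncomputable def renyiDiv {X : Type*} [MeasurableSpace X] (α : ℝ) (P Q : Measure X) : ℝ :=
  (α - 1)⁻¹ * Real.log (∫ x, (P.rnDeriv Q x).toReal ^ α ∂Q)

/-- The likelihood ratio of `N(m, v)` with respect to `N(n, v)`. -/
noncomputable def gaussRatio (m n v : ℝ) (x : ℝ) : ℝ :=
  Real.exp ((x - n) * (m - n) / v - (m - n) ^ 2 / (2 * v))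

lemma measurable_gaussRatio (m n v : ℝ) : Measurable (gaussRatio m n v) := by
  unfold gaussRatio
  fun_prop

lemma gaussRatio_pos (m n v x : ℝ) : 0 < gaussRatio m n v x := Real.exp_pos _

lemma gaussianReal_eq_withDensity (m n : ℝ) (v : NNReal) (hv : v ≠ 0) :
    gaussianReal m v =
      (gaussianReal n v).withDensity (fun x => ENNReal.ofReal (gaussRatio m n v x)) := by
  rw [gaussianReal_of_var_ne_zero m hv, gaussianReal_of_var_ne_zero n hv,
    ← withDensity_mul _ (measurable_gaussianPDF n v)
      (measurable_gaussRatio m n v).ennreal_ofReal]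
  congr 1
  ext x
  have hv' : (v : ℝ) ≠ 0 := by exact_mod_cast hv
  simp only [Pi.mul_apply, gaussianPDF_def]
  rw [← ENNReal.ofReal_mul (gaussianPDFReal_nonneg _ _ _)]
  congr 1
  simp only [gaussianPDFReal_def, gaussRatio]
  rw [mul_assoc (Real.sqrt _)⁻¹, ← Real.exp_add]
  congr 2
  field_simp
  ring

lemma lintegral_pi_prod {ι : Type*} [Fintype ι] (Q : ι → Measure ℝ)
    [∀ i, IsProbabilityMeasure (Q i)] (g : ι → ℝ → ENNReal) (hg : ∀ i, Measurable (g i)) :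
    ∫⁻ x, ∏ i, g i (x i) ∂(Measure.pi Q) = ∏ i, ∫⁻ x, g i x ∂(Q i) := by
  rw [lintegral_prod_eq_prod_lintegral_of_indepFun Finset.univ (fun i (x : ι → ℝ) => g i (x i))
    (iIndepFun_pi (fun i => (hg i).aemeasurable))
    (fun i => (hg i).comp (measurable_pi_apply i))]
  refine Finset.prod_congr rfl fun i _ => ?_
  exact (measurePreserving_eval Q i).lintegral_comp (hg i)

lemma pi_withDensity_prod {ι : Type*} [Fintype ι] (Q : ι → Measure ℝ)
    [∀ i, IsProbabilityMeasure (Q i)] (P : ι → Measure ℝ) [∀ i, IsProbabilityMeasure (P i)]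
    (g : ι → ℝ → ENNReal) (hg : ∀ i, Measurable (g i)) (h : ∀ i, P i = (Q i).withDensity (g i)) :
    Measure.pi P = (Measure.pi Q).withDensity (fun x => ∏ i, g i (x i)) := by
  classical
  refine Measure.pi_eq fun s hs => ?_
  have hS : MeasurableSet (Set.pi Set.univ s) := MeasurableSet.univ_pi hs
  rw [withDensity_apply _ hS, ← lintegral_indicator hS]
  have : ∀ x : ι → ℝ, (Set.pi Set.univ s).indicator (fun x => ∏ i, g i (x i)) x =
      ∏ i, (s i).indicator (g i) (x i) := by
    intro x
    by_cases hx : x ∈ Set.pi Set.univ s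
    · rw [Set.indicator_of_mem hx]
      exact Finset.prod_congr rfl fun i _ =>
        (Set.indicator_of_mem (hx i (Set.mem_univ i)) _).symm
    · rw [Set.indicator_of_notMem hx]
      have : ∃ i, x i ∉ s i := by simpa using hx
      obtain ⟨i, hi⟩ := this
      exact (Finset.prod_eq_zero (Finset.mem_univ i) (Set.indicator_of_notMem hi _)).symm
  simp_rw [this]
  rw [lintegral_pi_prod Q _ (fun i => (hg i).indicator (hs i))]
  refine Finset.prod_congr rfl fun i _ => ?_
  rw [lintegral_indicator (hs i), h i, withDensity_apply _ (hs i)]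

lemma integral_gaussRatio_rpow (m n : ℝ) (v : NNReal) (hv : v ≠ 0) (α : ℝ) :
    ∫ x, gaussRatio m n v x ^ α ∂(gaussianReal n v) =
      Real.exp ((α - 1) * (α * (m - n) ^ 2 / (2 * v))) := by
  have hv' : (v : ℝ) ≠ 0 := by exact_mod_cast hv
  have h1 : ∀ x, gaussRatio m n v x ^ α =
      Real.exp (-(α * n * (m - n) / v) - α * (m - n) ^ 2 / (2 * v)) *
        Real.exp ((α * (m - n) / v) * x) := by
    intro x
    rw [gaussRatio, ← Real.exp_mul, ← Real.exp_add]
    congr 1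
    field_simp
    ring
  simp_rw [h1]
  rw [integral_const_mul]
  have h2 := congrFun (mgf_fun_id_gaussianReal (μ := n) (v := v)) (α * (m - n) / v)
  simp only [mgf] at h2
  rw [h2, ← Real.exp_add]
  congr 1
  field_simp
  ring

/-- **Rényi-DP of the Gaussian Mechanism.**
For `σ > 0`, `Δ ≥ 0` and `μ, ν ∈ ℝ^p` with `‖μ − ν‖₂ ≤ Δ`, let `P` (resp. `Q`) be the product
over coordinates of Gaussians with means `μ_j` (resp. `ν_j`) and variance `σ²`.  Then for every
`α > 1`, `D_α(P‖Q) = α ‖μ − ν‖₂² / (2σ²)`, and in particular `D_α(P‖Q) ≤ α Δ² / (2σ²)`. -/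
theorem renyiDP_gaussian_mechanism (p : ℕ) (hp : 0 < p) (σ Δ : ℝ) (hσ : 0 < σ) (hΔ : 0 ≤ Δ)
    (μ ν : EuclideanSpace ℝ (Fin p)) (hsens : ‖μ - ν‖ ≤ Δ) (α : ℝ) (hα : 1 < α) :
    renyiDiv α (Measure.pi fun j => gaussianReal (μ j) (σ ^ 2).toNNReal)
        (Measure.pi fun j => gaussianReal (ν j) (σ ^ 2).toNNReal) =
      α * ‖μ - ν‖ ^ 2 / (2 * σ ^ 2) ∧
    renyiDiv α (Measure.pi fun j => gaussianReal (μ j) (σ ^ 2).toNNReal)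
        (Measure.pi fun j => gaussianReal (ν j) (σ ^ 2).toNNReal) ≤
      α * Δ ^ 2 / (2 * σ ^ 2) := by
  have hv : (σ ^ 2).toNNReal ≠ 0 := by
    simpa using hσ.ne'
  have hvc : (((σ ^ 2).toNNReal : NNReal) : ℝ) = σ ^ 2 := Real.coe_toNNReal _ (sq_nonneg σ)
  have key : renyiDiv α (Measure.pi fun j => gaussianReal (μ j) (σ ^ 2).toNNReal)
        (Measure.pi fun j => gaussianReal (ν j) (σ ^ 2).toNNReal) =
      α * ‖μ - ν‖ ^ 2 / (2 * σ ^ 2) := by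
    generalize hvv : (σ ^ 2).toNNReal = v at *
    have hmeas : ∀ j, Measurable fun x => ENNReal.ofReal (gaussRatio (μ j) (ν j) v x) :=
      fun j => (measurable_gaussRatio _ _ _).ennreal_ofReal
    have hd := pi_withDensity_prod (fun j => gaussianReal (ν j) v)
      (fun j => gaussianReal (μ j) v)
      (fun j x => ENNReal.ofReal (gaussRatio (μ j) (ν j) v x)) hmeas
      (fun j => gaussianReal_eq_withDensity _ _ v hv)
    have hrn := Measure.rnDeriv_withDensity (Measure.pi fun j => gaussianReal (ν j) v)
      (f := fun x => ∏ j, ENNReal.ofReal (gaussRatio (μ j) (ν j) v (x j)))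
      (Finset.measurable_prod _ fun j _ => (hmeas j).comp (measurable_pi_apply j))
    have hint : ∫ x, ((Measure.pi fun j => gaussianReal (μ j) v).rnDeriv
        (Measure.pi fun j => gaussianReal (ν j) v) x).toReal ^ α
          ∂(Measure.pi fun j => gaussianReal (ν j) v) =
        ∏ j, Real.exp ((α - 1) * (α * (μ j - ν j) ^ 2 / (2 * v))) := by
      rw [hd]
      have : (fun x => (((Measure.pi fun j => gaussianReal (ν j) v).withDensity
          (fun x => ∏ j, ENNReal.ofReal (gaussRatio (μ j) (ν j) v (x j)))).rnDeriv
          (Measure.pi fun j => gaussianReal (ν j) v) x).toReal ^ α)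
          =ᵐ[Measure.pi fun j => gaussianReal (ν j) v]
          fun x => ∏ j, gaussRatio (μ j) (ν j) v (x j) ^ α := by
        filter_upwards [hrn] with x hx
        rw [hx, ENNReal.toReal_prod,
          Real.finsetProd_rpow _ _ (fun j _ => (gaussRatio_pos _ _ _ _).le)]
        congr 1
        exact Finset.prod_congr rfl fun j _ =>
          ENNReal.toReal_ofReal (gaussRatio_pos _ _ _ _).le
      rw [integral_congr_ae this,
        integral_fintype_prod_eq_prod (fun j x => gaussRatio (μ j) (ν j) v x ^ α)]
      exact Finset.prod_congr rfl fun j _ => integral_gaussRatio_rpow _ _ v hv α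
    rw [renyiDiv, hint, ← Real.exp_sum, Real.log_exp, ← Finset.mul_sum,
      inv_mul_cancel_left₀ (by linarith), ← Finset.sum_div, ← Finset.mul_sum, hvc,
      EuclideanSpace.real_norm_sq_eq]
    rfl
  refine ⟨key, ?_⟩
  rw [key]
  have : 0 < α := by linarith
  gcongr
end

section
/- (Pure DP of the Exponential Mechanism.) Let R be a finite nonempty type, ε ≥ 0, Δ ≥ 0, and let q, q′ : R → ℝ be quality score functions with |q(r) − q′(r)| ≤ Δ for all r ∈ R. Define probability mass functions P(r) = exp(ε · q(r)) / Σ_{s∈R} exp(ε · q(s)) and Q(r) = exp(ε · q′(r)) / Σ_{s∈R} exp(ε · q′(s)). Then for every r ∈ R, P(r) ≤ exp(2εΔ) · Q(r). -/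
/-- **Pure DP of the Exponential Mechanism.**
For a finite nonempty type `R`, `ε ≥ 0`, `Δ ≥ 0`, and quality scores `q, q'` with
`|q(r) − q'(r)| ≤ Δ` for all `r`, the exponential-mechanism output distributions
`P(r) = exp(ε q(r)) / Σ_s exp(ε q(s))` and `Q(r) = exp(ε q'(r)) / Σ_s exp(ε q'(s))` satisfy
`P(r) ≤ exp(2εΔ) · Q(r)` for every `r`. -/
theorem exponential_mechanism_pure_dp {R : Type*} [Fintype R] [Nonempty R]
    (ε Δ : ℝ) (hε : 0 ≤ ε) (hΔ : 0 ≤ Δ) (q q' : R → ℝ)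
    (hsens : ∀ r, |q r - q' r| ≤ Δ)
    (P Q : R → ℝ)
    (hP : ∀ r, P r = Real.exp (ε * q r) / ∑ s, Real.exp (ε * q s))
    (hQ : ∀ r, Q r = Real.exp (ε * q' r) / ∑ s, Real.exp (ε * q' s)) :
    ∀ r, P r ≤ Real.exp (2 * ε * Δ) * Q r := by
  intro r
  have hpos : ∀ f : R → ℝ, 0 < ∑ s, Real.exp (ε * f s) := fun f =>
    Finset.sum_pos (fun s _ => Real.exp_pos _) Finset.univ_nonempty
  have h1 : Real.exp (ε * q r) ≤ Real.exp (ε * Δ) * Real.exp (ε * q' r) := by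
    rw [← Real.exp_add, ← mul_add]
    have := (abs_le.mp (hsens r)).2
    exact Real.exp_le_exp.mpr (mul_le_mul_of_nonneg_left (by linarith) hε)
  have h2 : ∑ s, Real.exp (ε * q' s) ≤ Real.exp (ε * Δ) * ∑ s, Real.exp (ε * q s) := by
    rw [Finset.mul_sum]
    refine Finset.sum_le_sum fun s _ => ?_
    rw [← Real.exp_add, ← mul_add]
    have := (abs_le.mp (hsens s)).1
    exact Real.exp_le_exp.mpr (mul_le_mul_of_nonneg_left (by linarith) hε)
  have h3 : Real.exp (2 * ε * Δ) = Real.exp (ε * Δ) * Real.exp (ε * Δ) := by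
    rw [← Real.exp_add]
    congr 1
    ring
  rw [hP, hQ, h3, ← mul_div_assoc, div_le_div_iff₀ (hpos q) (hpos q')]
  calc Real.exp (ε * q r) * ∑ s, Real.exp (ε * q' s)
      ≤ (Real.exp (ε * Δ) * Real.exp (ε * q' r)) *
          (Real.exp (ε * Δ) * ∑ s, Real.exp (ε * q s)) :=
        mul_le_mul h1 h2 (hpos q').le (by positivity)
    _ = _ := by ring
end

section
/- (Bounded range of the Exponential Mechanism.) Let R be a finite nonempty type, ε ≥ 0, Δ ≥ 0, and let q, q′ : R → ℝ satisfy |q(r) − q′(r)| ≤ Δ for all r ∈ R. Define P(r) = exp(ε · q(r)) / Σ_{s∈R} exp(ε · q(s)) and Q(r) = exp(ε · q′(r)) / Σ_{s∈R} exp(ε · q′(s)). Then there exists a real number c such that for every r ∈ R, c ≤ log(P(r)/Q(r)) ≤ c + 2εΔ. -/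
/-- **Bounded range of the Exponential Mechanism.**
For a finite nonempty type `R`, `ε ≥ 0`, `Δ ≥ 0`, and quality scores `q, q'` with
`|q(r) − q'(r)| ≤ Δ` for all `r`, the log-probability ratios of the exponential-mechanism
output distributions all lie in an interval of length `2εΔ`: there exists `c ∈ ℝ` with
`c ≤ log(P(r)/Q(r)) ≤ c + 2εΔ` for every `r`. -/
theorem exponential_mechanism_bounded_range {R : Type*} [Fintype R] [Nonempty R]
    (ε Δ : ℝ) (hε : 0 ≤ ε) (hΔ : 0 ≤ Δ) (q q' : R → ℝ)
    (hsens : ∀ r, |q r - q' r| ≤ Δ)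
    (P Q : R → ℝ)
    (hP : ∀ r, P r = Real.exp (ε * q r) / ∑ s, Real.exp (ε * q s))
    (hQ : ∀ r, Q r = Real.exp (ε * q' r) / ∑ s, Real.exp (ε * q' s)) :
    ∃ c : ℝ, ∀ r, c ≤ Real.log (P r / Q r) ∧ Real.log (P r / Q r) ≤ c + 2 * ε * Δ := by
  have hA : 0 < ∑ s, Real.exp (ε * q s) :=
    Finset.sum_pos (fun s _ => Real.exp_pos _) Finset.univ_nonempty
  have hB : 0 < ∑ s, Real.exp (ε * q' s) :=
    Finset.sum_pos (fun s _ => Real.exp_pos _) Finset.univ_nonempty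
  refine ⟨Real.log (∑ s, Real.exp (ε * q' s)) - Real.log (∑ s, Real.exp (ε * q s)) - ε * Δ,
    fun r => ?_⟩
  have key : Real.log (P r / Q r) = ε * (q r - q' r)
      + Real.log (∑ s, Real.exp (ε * q' s)) - Real.log (∑ s, Real.exp (ε * q s)) := by
    rw [hP, hQ, Real.log_div (div_pos (Real.exp_pos _) hA).ne' (div_pos (Real.exp_pos _) hB).ne',
      Real.log_div (Real.exp_pos _).ne' hA.ne', Real.log_div (Real.exp_pos _).ne' hB.ne',
      Real.log_exp, Real.log_exp]
    ring
  obtain ⟨h1, h2⟩ := abs_le.mp (hsens r)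
  have h3 := mul_le_mul_of_nonneg_left h1 hε
  have h4 := mul_le_mul_of_nonneg_left h2 hε
  rw [key]
  constructor <;> linarith
end

section
/- (Bounded range implies Rényi-DP.) Let R be a finite nonempty type and let P, Q : R → ℝ be strictly positive probability mass functions (P(r) > 0 and Q(r) > 0 for all r, with Σ_r P(r) = Σ_r Q(r) = 1). Suppose there exist c ∈ ℝ and β ≥ 0 such that c ≤ log(P(r)/Q(r)) ≤ c + β for every r ∈ R. Then for every α > 1, the Rényi divergence of order α satisfies (1/(α−1)) · log (Σ_{r∈R} P(r)^α Q(r)^{1−α}) ≤ α β² / 8. -/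
open MeasureTheory ProbabilityTheory in
/-- Hoeffding's lemma for a finite probability mass function. -/
lemma finite_hoeffding {R : Type*} [Fintype R] (P X : R → ℝ) (hP : ∀ r, 0 < P r)
    (hs : ∑ r, P r = 1) (a b : ℝ) (hX : ∀ r, a ≤ X r ∧ X r ≤ b) (hab : a ≤ b) (t : ℝ) :
    ∑ r, P r * Real.exp (t * (X r - ∑ r, P r * X r)) ≤ Real.exp ((b - a) ^ 2 * t ^ 2 / 8) := by
  classical
  let _ : MeasurableSpace R := ⊤
  have _ : MeasurableSingletonClass R := ⟨fun _ => trivial⟩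
  have hsum : ∑ r, ENNReal.ofReal (P r) = 1 := by
    rw [← ENNReal.ofReal_sum_of_nonneg (fun r _ => (hP r).le), hs, ENNReal.ofReal_one]
  let p : PMF R := PMF.ofFintype (fun r => ENNReal.ofReal (P r)) hsum
  have hint : ∀ f : R → ℝ, ∫ r, f r ∂p.toMeasure = ∑ r, P r * f r := by
    intro f
    rw [PMF.integral_eq_sum]
    refine Finset.sum_congr rfl fun r _ => ?_
    simp [p, ENNReal.toReal_ofReal (hP r).le]
  have hh := hasSubgaussianMGF_of_mem_Icc (μ := p.toMeasure) (X := X) (a := a) (b := b)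
    (measurable_from_top.aemeasurable) (Filter.Eventually.of_forall fun r => hX r)
  have h := hh.mgf_le t
  simp only [mgf, hint] at h
  refine h.trans (le_of_eq ?_)
  congr 1
  have : ‖b - a‖ = b - a := by rw [Real.norm_eq_abs, abs_of_nonneg (by linarith)]
  push_cast
  rw [this]
  ring

/-- **Bounded range implies Rényi-DP.**
Let `P, Q` be strictly positive probability mass functions on a finite nonempty type `R`, and
suppose there exist `c ∈ ℝ` and `β ≥ 0` with `c ≤ log(P(r)/Q(r)) ≤ c + β` for every `r`.
Then for every `α > 1`, the Rényi divergence of order `α` satisfies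
`(1/(α−1)) · log (Σ_r P(r)^α Q(r)^(1−α)) ≤ α β² / 8`. -/
theorem bounded_range_implies_rdp {R : Type*} [Fintype R] [Nonempty R]
    (P Q : R → ℝ) (hPpos : ∀ r, 0 < P r) (hQpos : ∀ r, 0 < Q r)
    (hPsum : ∑ r, P r = 1) (hQsum : ∑ r, Q r = 1)
    (c β : ℝ) (hβ : 0 ≤ β)
    (hrange : ∀ r, c ≤ Real.log (P r / Q r) ∧ Real.log (P r / Q r) ≤ c + β)
    (α : ℝ) (hα : 1 < α) :
    (α - 1)⁻¹ * Real.log (∑ r, P r ^ α * Q r ^ (1 - α)) ≤ α * β ^ 2 / 8 := by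
  set X : R → ℝ := fun r => Real.log (P r / Q r) with hXdef
  have hH := finite_hoeffding P X hPpos hPsum c (c + β) hrange (by linarith)
  set m := ∑ r, P r * X r with hm
  have hXexp : ∀ r t, Real.exp (t * X r) = P r ^ t * Q r ^ (-t) := by
    intro r t
    rw [Real.rpow_def_of_pos (hPpos r), Real.rpow_def_of_pos (hQpos r), ← Real.exp_add, hXdef]
    simp only
    rw [Real.log_div (hPpos r).ne' (hQpos r).ne']
    congr 1
    ring
  have hH' : ∀ t, ∑ r, P r ^ (1 + t) * Q r ^ (-t) ≤ Real.exp (t * m + β ^ 2 * t ^ 2 / 8) := by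
    intro t
    have h := mul_le_mul_of_nonneg_left (hH t) (Real.exp_pos (t * m)).le
    rw [← Real.exp_add, Finset.mul_sum] at h
    have e1 : ∑ r, P r ^ (1 + t) * Q r ^ (-t)
        = ∑ r, Real.exp (t * m) * (P r * Real.exp (t * (X r - m))) := by
      refine Finset.sum_congr rfl fun r _ => ?_
      rw [Real.rpow_add (hPpos r), Real.rpow_one, mul_assoc, ← hXexp, mul_left_comm,
        ← Real.exp_add]
      ring_nf
    rw [add_sub_cancel_left] at h
    rw [e1]
    exact h
  have h1 := hH' (-1)
  have h2 := hH' (α - 1)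
  have h1' : ∑ r, P r ^ ((1 : ℝ) + -1) * Q r ^ (-(-1 : ℝ)) = 1 := by
    simp [hQsum]
  rw [h1', Real.one_le_exp_iff] at h1
  have hpos : 0 < ∑ r, P r ^ α * Q r ^ (1 - α) :=
    Finset.sum_pos (fun r _ => mul_pos (Real.rpow_pos_of_pos (hPpos r) _)
      (Real.rpow_pos_of_pos (hQpos r) _)) Finset.univ_nonempty
  rw [show 1 + (α - 1) = α by ring, show -(α - 1) = 1 - α by ring,
    ← Real.log_le_iff_le_exp hpos] at h2
  have hα' : 0 < α - 1 := by linarith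
  rw [inv_mul_le_iff₀ hα']
  nlinarith
end
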